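/- arXiv:0706.3547 — 6 statements merged into one kernel-verified Lean document; each statement's English description precedes it below -/
import Mathlib

section
/- Let Λ be a k-graph and let α be an action of ℤ^l on Λ by automorphisms. Then the data consisting of morphism set Λ × ℕ^l, degree map d(λ,m) = (d(λ),m) ∈ ℕ^{k+l}, range r(λ,m) = (r(λ),0), source s(λ,m) = (α_{-m}(s(λ)),0), identities (v,0) for vertices v of Λ, and composition (μ,m)(ν,n) = (μ·α_m(ν), m+n) whenever s(μ,m) = r(ν,n), forms a (k+l)-graph: composition is associative with the stated identities, and the degree map satisfies the factorisation property. -/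
/-!
Twisting by the action turns composability in the crossed product into composability in `Λ`:
`(μ, m)` and `(ν, n)` are composable exactly when `μ` and `α_m(ν)` are. Each category axiom for
the crossed product is then the corresponding axiom for `Λ` together with
`α_{m+n} = α_m ∘ α_n`. For the factorisation property, if `d(λ, p) = (a + b, m + n)` and
`λ = μν` is the unique factorisation in `Λ` with `d μ = a`, `d ν = b`, then
`((μ, m), (α_{-m}(ν), n))` is a factorisation of `(λ, p)`. It is the only one, because any
factorisation `((μ', m), (ν', n))` yields the factorisation `μ' α_m(ν')` of `λ`.
-/

/-- The underlying data of a higher-rank graph of rank `ι`: a set `M` of morphisms together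
with a degree map into `ι → ℕ`, range and source maps (whose values are thought of as the
identity morphisms at the range/source object), and a (total) composition map, whose values
are only relevant on composable pairs. -/
structure KGraphStr (ι : Type) (M : Type) where
  d : M → ι → ℕ
  rng : M → M
  src : M → M
  comp : M → M → M

namespace KGraphStr

variable {ι ι' M N : Type}

/-- `Λ` is a `k`-graph (of rank `ι`): a countable small category (objects identified with the
identity morphisms, which are the degree-`0` morphisms) together with a degree functor
satisfying the factorisation property. -/
structure IsKGraph (Λ : KGraphStr ι M) : Prop where
  countable : Countable M
  d_rng : ∀ μ, Λ.d (Λ.rng μ) = 0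
  d_src : ∀ μ, Λ.d (Λ.src μ) = 0
  rng_rng : ∀ μ, Λ.rng (Λ.rng μ) = Λ.rng μ
  src_rng : ∀ μ, Λ.src (Λ.rng μ) = Λ.rng μ
  rng_src : ∀ μ, Λ.rng (Λ.src μ) = Λ.src μ
  src_src : ∀ μ, Λ.src (Λ.src μ) = Λ.src μ
  id_comp : ∀ μ, Λ.comp (Λ.rng μ) μ = μ
  comp_id : ∀ μ, Λ.comp μ (Λ.src μ) = μ
  rng_comp : ∀ μ ν, Λ.src μ = Λ.rng ν → Λ.rng (Λ.comp μ ν) = Λ.rng μ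
  src_comp : ∀ μ ν, Λ.src μ = Λ.rng ν → Λ.src (Λ.comp μ ν) = Λ.src ν
  d_comp : ∀ μ ν, Λ.src μ = Λ.rng ν → Λ.d (Λ.comp μ ν) = Λ.d μ + Λ.d ν
  comp_assoc : ∀ μ ν ξ, Λ.src μ = Λ.rng ν → Λ.src ν = Λ.rng ξ →
      Λ.comp (Λ.comp μ ν) ξ = Λ.comp μ (Λ.comp ν ξ)
  factorisation : ∀ (lam : M) (m n : ι → ℕ), Λ.d lam = m + n →
      ∃! p : M × M, Λ.d p.1 = m ∧ Λ.d p.2 = n ∧ Λ.src p.1 = Λ.rng p.2 ∧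
        Λ.comp p.1 p.2 = lam

/-- An action of `ℤ^l` on the rank-`ι` graph `Λ` by automorphisms: a group homomorphism
`m ↦ act m` from `ℤ^l` into the automorphisms of `Λ` (each `act m` is automatically bijective,
with inverse `act (-m)`, and is a degree-preserving functor). -/
structure ZlAction (l : ℕ) (Λ : KGraphStr ι M) where
  act : (Fin l → ℤ) → M → M
  act_zero : ∀ μ, act 0 μ = μ
  act_add : ∀ m n μ, act (m + n) μ = act m (act n μ)
  map_d : ∀ m μ, Λ.d (act m μ) = Λ.d μ
  map_rng : ∀ m μ, Λ.rng (act m μ) = act m (Λ.rng μ)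
  map_src : ∀ m μ, Λ.src (act m μ) = act m (Λ.src μ)
  map_comp : ∀ m μ ν, Λ.src μ = Λ.rng ν →
      act m (Λ.comp μ ν) = Λ.comp (act m μ) (act m ν)

/-- The canonical inclusion of `ℕ^l` in `ℤ^l`. -/
def natToInt {l : ℕ} (m : Fin l → ℕ) : Fin l → ℤ := fun i => (m i : ℤ)

/-- The crossed-product `(k+l)`-graph `Λ ×_α ℤ^l`: morphisms `Λ × ℕ^l`, degree
`d(λ,m) = (d λ, m)`, range `r(λ,m) = (r λ, 0)`, source `s(λ,m) = (α_{-m}(s λ), 0)`, and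
composition `(μ,m)(ν,n) = (μ·α_m(ν), m+n)`. -/
def crossedProd (Λ : KGraphStr ι M) {l : ℕ} (α : ZlAction l Λ) :
    KGraphStr (ι ⊕ Fin l) (M × (Fin l → ℕ)) where
  d := fun p => Sum.elim (Λ.d p.1) (fun i => p.2 i)
  rng := fun p => (Λ.rng p.1, 0)
  src := fun p => (α.act (-(natToInt p.2)) (Λ.src p.1), 0)
  comp := fun p q => (Λ.comp p.1 (α.act (natToInt p.2) q.1), p.2 + q.2)

end KGraphStr

open KGraphStr

theorem act_neg_act {l : ℕ} {ι M : Type} {Λ : KGraphStr ι M} (α : ZlAction l Λ)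
    (m : Fin l → ℤ) (μ : M) : α.act (-m) (α.act m μ) = μ := by
  rw [← α.act_add, neg_add_cancel, α.act_zero]

theorem act_act_neg {l : ℕ} {ι M : Type} {Λ : KGraphStr ι M} (α : ZlAction l Λ)
    (m : Fin l → ℤ) (μ : M) : α.act m (α.act (-m) μ) = μ := by
  rw [← α.act_add, add_neg_cancel, α.act_zero]

theorem natToInt_zero {l : ℕ} : natToInt (0 : Fin l → ℕ) = 0 := by
  funext i; simp [natToInt]

theorem natToInt_add {l : ℕ} (m n : Fin l → ℕ) :
    natToInt (m + n) = natToInt m + natToInt n := by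
  funext i; simp [natToInt]

/-- Composability in the crossed product is composability in `Λ` after twisting by `α`. -/
theorem crossedProd_composable_iff {l : ℕ} {ι M : Type} {Λ : KGraphStr ι M}
    (α : ZlAction l Λ) (p q : M × (Fin l → ℕ)) :
    (crossedProd Λ α).src p = (crossedProd Λ α).rng q ↔
      Λ.src p.1 = Λ.rng (α.act (natToInt p.2) q.1) := by
  simp only [crossedProd, Prod.mk.injEq, and_true, α.map_rng]
  constructor
  · intro h
    rw [← h, act_act_neg]
  · intro h
    rw [h, act_neg_act]

theorem stmt0 {k l : ℕ} {M : Type} (Λ : KGraphStr (Fin k) M) (hΛ : Λ.IsKGraph)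
    (α : ZlAction l Λ) : (crossedProd Λ α).IsKGraph := by
  have hcomp := crossedProd_composable_iff α
  have hd (p : M × (Fin l → ℕ)) (m : Fin k ⊕ Fin l → ℕ) :
      (crossedProd Λ α).d p = m ↔ Λ.d p.1 = m ∘ Sum.inl ∧ p.2 = m ∘ Sum.inr := by
    constructor
    · rintro rfl
      exact ⟨rfl, rfl⟩
    · rintro ⟨h1, h2⟩
      funext i
      rcases i with i | i
      · exact congrFun h1 i
      · exact congrFun h2 i
  refine
    { countable := ?_
      d_rng := fun p => (hd _ _).2 ⟨hΛ.d_rng _, rfl⟩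
      d_src := fun p => (hd _ _).2 ⟨(α.map_d _ _).trans (hΛ.d_src _), rfl⟩
      rng_rng := fun p => Prod.ext (hΛ.rng_rng _) rfl
      src_rng := ?_
      rng_src := ?_
      src_src := ?_
      id_comp := ?_
      comp_id := ?_
      rng_comp := ?_
      src_comp := ?_
      d_comp := ?_
      comp_assoc := ?_
      factorisation := ?_ }
  · have := hΛ.countable
    infer_instance
  · intro p
    simp [crossedProd, natToInt_zero, α.act_zero, hΛ.src_rng]
  · intro p
    simp [crossedProd, α.map_rng, hΛ.rng_src]
  · intro p
    simp [crossedProd, natToInt_zero, α.act_zero, α.map_src, hΛ.src_src]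
  · intro p
    simp [crossedProd, natToInt_zero, α.act_zero, hΛ.id_comp]
  · intro p
    simp [crossedProd, act_act_neg, hΛ.comp_id]
  · intro p q h
    exact Prod.ext (hΛ.rng_comp _ _ ((hcomp _ _).1 h)) rfl
  · intro p q h
    refine Prod.ext ?_ rfl
    change α.act (-natToInt (p.2 + q.2)) (Λ.src (Λ.comp p.1 (α.act (natToInt p.2) q.1))) =
      α.act (-natToInt q.2) (Λ.src q.1)
    rw [hΛ.src_comp _ _ ((hcomp _ _).1 h), natToInt_add, α.map_src, ← α.act_add]
    congr 1
    abel
  · intro p q h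
    refine (hd _ _).2 ⟨?_, rfl⟩
    refine (hΛ.d_comp _ _ ((hcomp _ _).1 h)).trans ?_
    rw [α.map_d]
    rfl
  · intro p q x h h'
    have h1 := (hcomp _ _).1 h
    have h2 := (hcomp _ _).1 h'
    have h3 : Λ.src (α.act (natToInt p.2) q.1) =
        Λ.rng (α.act (natToInt p.2) (α.act (natToInt q.2) x.1)) := by
      rw [α.map_src, h2, α.map_rng _ (α.act (natToInt q.2) x.1)]
    refine Prod.ext ?_ (add_assoc _ _ _)
    change Λ.comp (Λ.comp p.1 (α.act (natToInt p.2) q.1)) (α.act (natToInt (p.2 + q.2)) x.1) =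
      Λ.comp p.1 (α.act (natToInt p.2) (Λ.comp q.1 (α.act (natToInt q.2) x.1)))
    rw [natToInt_add, α.act_add, hΛ.comp_assoc _ _ _ h1 h3, α.map_comp _ _ _ h2]
  · rintro ⟨lam, t⟩ m n h
    obtain ⟨h1, h2⟩ := (hd _ _).1 h
    obtain ⟨⟨μ, ν⟩, ⟨hμ, hν, hs, hc⟩, huniq⟩ :=
      hΛ.factorisation lam (m ∘ Sum.inl) (n ∘ Sum.inl) h1
    refine ⟨((μ, m ∘ Sum.inr), (α.act (-natToInt (m ∘ Sum.inr)) ν, n ∘ Sum.inr)),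
      ⟨(hd _ _).2 ⟨hμ, rfl⟩, (hd _ _).2 ⟨(α.map_d _ _).trans hν, rfl⟩, ?_, ?_⟩, ?_⟩
    · rw [hcomp, act_act_neg]
      exact hs
    · refine Prod.ext ?_ h2.symm
      change Λ.comp μ (α.act (natToInt (m ∘ Sum.inr)) (α.act (-natToInt (m ∘ Sum.inr)) ν)) = lam
      rw [act_act_neg]
      exact hc
    · rintro ⟨⟨μ', a⟩, ⟨ν', b⟩⟩ ⟨e1, e2, e3, e4⟩
      obtain ⟨e1, rfl⟩ := (hd _ _).1 e1
      obtain ⟨e2, rfl⟩ := (hd _ _).1 e2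
      have key := huniq (μ', α.act (natToInt (m ∘ Sum.inr)) ν')
        ⟨e1, (α.map_d _ _).trans e2, (hcomp _ _).1 e3, congrArg Prod.fst e4⟩
      obtain ⟨rfl, rfl⟩ := Prod.mk.inj key
      rw [act_neg_act]
end

section
/- Let Λ be a k-graph and α an action of ℤ^l on Λ by automorphisms. Then the crossed-product (k+l)-graph Λ ×_α ℤ^l is finitely aligned if and only if Λ is finitely aligned. -/
namespace KGraphStr

variable {ι M : Type}

/-- `lam` factors through `μ`, i.e. `lam = μ·a` for some morphism `a` composable with `μ`. -/
def factorsThrough (Λ : KGraphStr ι M) (μ lam : M) : Prop :=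
  ∃ a, Λ.src μ = Λ.rng a ∧ Λ.comp μ a = lam

/-- The set of minimal common extensions of `μ` and `ν`: common extensions `lam = μa = νb`
of degree `d μ ⊔ d ν` (the coordinatewise maximum). -/
def MCE (Λ : KGraphStr ι M) (μ ν : M) : Set M :=
  {lam | Λ.factorsThrough μ lam ∧ Λ.factorsThrough ν lam ∧ Λ.d lam = Λ.d μ ⊔ Λ.d ν}

/-- A rank-`ι` graph is finitely aligned if every pair of morphisms has only finitely many
(possibly none) minimal common extensions. -/
def FinitelyAligned (Λ : KGraphStr ι M) : Prop := ∀ μ ν, (Λ.MCE μ ν).Finite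

end KGraphStr

open KGraphStr

theorem crossedProd_factorsThrough_iff {ι M : Type} {l : ℕ} (Λ : KGraphStr ι M)
    (α : ZlAction l Λ) (μ lam : M) (m p : Fin l → ℕ) :
    (crossedProd Λ α).factorsThrough (μ, m) (lam, p) ↔ Λ.factorsThrough μ lam ∧ m ≤ p := by
  have act_neg : ∀ (z : Fin l → ℤ) (x : M), α.act z (α.act (-z) x) = x := fun z x => by
    rw [← α.act_add, add_neg_cancel, α.act_zero]
  constructor
  · rintro ⟨⟨a, n⟩, hs, hc⟩
    simp only [crossedProd, Prod.mk.injEq, and_true] at hs hc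
    refine ⟨⟨α.act (natToInt m) a, ?_, hc.1⟩, hc.2 ▸ le_self_add⟩
    rw [α.map_rng, ← hs, act_neg]
  · rintro ⟨⟨b, hs, hc⟩, hmp⟩
    refine ⟨(α.act (-natToInt m) b, p - m), ?_, ?_⟩
    · simp only [crossedProd, Prod.mk.injEq, and_true]
      rw [α.map_rng, hs]
    · simp only [crossedProd, Prod.mk.injEq]
      exact ⟨by rw [act_neg, hc], add_tsub_cancel_of_le hmp⟩

theorem crossedProd_MCE {ι M : Type} {l : ℕ} (Λ : KGraphStr ι M)
    (α : ZlAction l Λ) (μ ν : M) (m n : Fin l → ℕ) :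
    (crossedProd Λ α).MCE (μ, m) (ν, n) = Λ.MCE μ ν ×ˢ {m ⊔ n} := by
  ext ⟨lam, p⟩
  have hd : (crossedProd Λ α).d (lam, p) =
      (crossedProd Λ α).d (μ, m) ⊔ (crossedProd Λ α).d (ν, n) ↔
      Λ.d lam = Λ.d μ ⊔ Λ.d ν ∧ p = m ⊔ n := by
    simp [crossedProd, funext_iff]
  simp only [MCE, Set.mem_ofPred_eq, Set.mem_prod, Set.mem_singleton_iff,
    crossedProd_factorsThrough_iff, hd]
  constructor
  · rintro ⟨⟨h1, -⟩, ⟨h2, -⟩, h3, h4⟩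
    exact ⟨⟨h1, h2, h3⟩, h4⟩
  · rintro ⟨⟨h1, h2, h3⟩, rfl⟩
    exact ⟨⟨h1, le_sup_left⟩, ⟨h2, le_sup_right⟩, h3, rfl⟩

theorem stmt2 {k l : ℕ} {M : Type} (Λ : KGraphStr (Fin k) M) (hΛ : Λ.IsKGraph)
    (α : ZlAction l Λ) :
    FinitelyAligned (crossedProd Λ α) ↔ FinitelyAligned Λ := by
  constructor
  · intro h μ ν
    have := h (μ, 0) (ν, 0)
    rw [crossedProd_MCE] at this
    exact this.of_prod_left (Set.singleton_nonempty _)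
  · rintro h ⟨μ, m⟩ ⟨ν, n⟩
    rw [crossedProd_MCE]
    exact (h μ ν).prod (Set.finite_singleton _)
end

section
/- Let Λ be a row-finite k-graph with no sources and α an action of ℤ^l on Λ by automorphisms. If y and z are infinite paths in the crossed-product (k+l)-graph Λ ×_α ℤ^l such that y((0,0),(p,0)) = z((0,0),(p,0)) for all p ∈ ℕ^k, then y = z. -/
namespace KGraphStr

variable {ι M : Type}

/-- The set `vΛ^p` of morphisms with range `v` and degree `p`. -/
def rngDegSet (Λ : KGraphStr ι M) (v : M) (p : ι → ℕ) : Set M :=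
  {lam | Λ.rng lam = v ∧ Λ.d lam = p}

/-- The set `Λ^p v` of morphisms with source `v` and degree `p`. -/
def srcDegSet (Λ : KGraphStr ι M) (v : M) (p : ι → ℕ) : Set M :=
  {lam | Λ.src lam = v ∧ Λ.d lam = p}

/-- A rank-`ι` graph is row-finite if `vΛ^p` is finite for every vertex `v` (i.e. every
degree-zero morphism) and every `p`. -/
def RowFinite (Λ : KGraphStr ι M) : Prop :=
  ∀ v, Λ.d v = 0 → ∀ p, (Λ.rngDegSet v p).Finite

/-- A rank-`ι` graph has no sources if `vΛ^p` is nonempty for every vertex `v` and every `p`. -/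
def NoSources (Λ : KGraphStr ι M) : Prop :=
  ∀ v, Λ.d v = 0 → ∀ p, (Λ.rngDegSet v p).Nonempty

end KGraphStr

namespace KGraphStr

variable {ι M N : Type}

theorem pi_zero_le (f : ι → ℕ) : (0 : ι → ℕ) ≤ f := fun _ => Nat.zero_le _

/-- The morphisms of the rank-`ι` graph `Ω_ι`: pairs `(m,n)` with `m ≤ n` in `ℕ^ι`. -/
def OmegaMor (ι : Type) : Type := {q : (ι → ℕ) × (ι → ℕ) // q.1 ≤ q.2}

/-- The rank-`ι` graph `Ω_ι` with morphisms `{(m,n) : m ≤ n}`, `r(m,n) = (m,m)`,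
`s(m,n) = (n,n)`, `d(m,n) = n - m` and composition `(m,n)(n,p) = (m,p)`. -/
def Omega (ι : Type) : KGraphStr ι (OmegaMor ι) where
  d := fun q => q.1.2 - q.1.1
  rng := fun q => ⟨(q.1.1, q.1.1), le_rfl⟩
  src := fun q => ⟨(q.1.2, q.1.2), le_rfl⟩
  comp := fun q q' => ⟨(q.1.1, q.1.1 ⊔ q'.1.2), le_sup_left⟩

/-- A morphism of rank-`ι` graphs (a degree-preserving functor). -/
structure IsKGraphHom (Γ : KGraphStr ι N) (Λ : KGraphStr ι M) (f : N → M) : Prop where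
  map_d : ∀ x, Λ.d (f x) = Γ.d x
  map_rng : ∀ x, Λ.rng (f x) = f (Γ.rng x)
  map_src : ∀ x, Λ.src (f x) = f (Γ.src x)
  map_comp : ∀ x y, Γ.src x = Γ.rng y → f (Γ.comp x y) = Λ.comp (f x) (f y)

/-- An infinite path in `Λ`: a degree-preserving functor `x : Ω_ι → Λ`. -/
def InfPath (Λ : KGraphStr ι M) : Type :=
  {x : OmegaMor ι → M // IsKGraphHom (Omega ι) Λ x}

/-- The vertex `x(n)` on an infinite path `x`. -/
def InfPath.vertex {Λ : KGraphStr ι M} (x : InfPath Λ) (n : ι → ℕ) : M :=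
  x.1 ⟨(n, n), le_rfl⟩

/-- The cylinder set `λΛ^∞` of infinite paths whose initial segment of degree `d λ`
is `λ`. -/
def cylinder (Λ : KGraphStr ι M) (lam : M) : Set (InfPath Λ) :=
  {x | x.1 ⟨(0, Λ.d lam), pi_zero_le _⟩ = lam}

/-- The topology on the infinite-path space generated by the cylinder sets. -/
def pathTopology (Λ : KGraphStr ι M) : TopologicalSpace (InfPath Λ) :=
  TopologicalSpace.generateFrom {S | ∃ lam, S = Λ.cylinder lam}

end KGraphStr

open KGraphStr

namespace KGraphStr

/-- A morphism of degree `0` is an identity. -/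
theorem IsKGraph.rng_eq_of_d_eq_zero {ι M : Type} {Λ : KGraphStr ι M} (hΛ : Λ.IsKGraph) {v : M}
    (hv : Λ.d v = 0) : Λ.rng v = v := by
  obtain ⟨q, -, hq⟩ := hΛ.factorisation v 0 0 (by simp [hv])
  have h1 := hq (Λ.rng v, v) ⟨hΛ.d_rng v, hv, hΛ.src_rng v, hΛ.id_comp v⟩
  have h2 := hq (v, Λ.src v) ⟨hv, hΛ.d_src v, (hΛ.rng_src v).symm, hΛ.comp_id v⟩
  exact congrArg Prod.fst (h1.trans h2.symm)

theorem IsKGraph.left_cancel {ι M : Type} {Λ : KGraphStr ι M} (hΛ : Λ.IsKGraph) {μ ν ν' : M}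
    (h : Λ.src μ = Λ.rng ν) (h' : Λ.src μ = Λ.rng ν') (hd : Λ.d ν = Λ.d ν')
    (hc : Λ.comp μ ν = Λ.comp μ ν') : ν = ν' := by
  obtain ⟨q, -, hq⟩ := hΛ.factorisation (Λ.comp μ ν) _ _ (hΛ.d_comp μ ν h)
  have h1 := hq (μ, ν) ⟨rfl, rfl, h, rfl⟩
  have h2 := hq (μ, ν') ⟨rfl, hd.symm, h', hc.symm⟩
  exact congrArg Prod.snd (h1.trans h2.symm)

theorem ZlAction.act_act_neg {ι M : Type} {l : ℕ} {Λ : KGraphStr ι M} (α : ZlAction l Λ)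
    (m : Fin l → ℤ) (μ : M) : α.act m (α.act (-m) μ) = μ := by
  rw [← α.act_add, add_neg_cancel, α.act_zero]

theorem ZlAction.act_injective {ι M : Type} {l : ℕ} {Λ : KGraphStr ι M} (α : ZlAction l Λ)
    (m : Fin l → ℤ) : Function.Injective (α.act m) := by
  intro a b hab
  have := congrArg (α.act (-m)) hab
  rwa [← α.act_add, ← α.act_add, neg_add_cancel, α.act_zero, α.act_zero] at this

/-- Composability in the crossed product, read in `Λ`. -/
theorem src_eq_rng_act {ι M : Type} {l : ℕ} {Λ : KGraphStr ι M} {α : ZlAction l Λ}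
    {a b : M × (Fin l → ℕ)} (h : (crossedProd Λ α).src a = (crossedProd Λ α).rng b) :
    Λ.src a.1 = Λ.rng (α.act (natToInt a.2) b.1) := by
  have h1 : α.act (-(natToInt a.2)) (Λ.src a.1) = Λ.rng b.1 := congrArg Prod.fst h
  rw [α.map_rng, ← h1, α.act_act_neg]

theorem crossedProd_left_cancel {ι M : Type} {l : ℕ} {Λ : KGraphStr ι M} (hΛ : Λ.IsKGraph)
    {α : ZlAction l Λ} {a b b' : M × (Fin l → ℕ)}
    (h : (crossedProd Λ α).src a = (crossedProd Λ α).rng b)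
    (h' : (crossedProd Λ α).src a = (crossedProd Λ α).rng b')
    (hd : (crossedProd Λ α).d b = (crossedProd Λ α).d b')
    (hc : (crossedProd Λ α).comp a b = (crossedProd Λ α).comp a b') : b = b' := by
  have hd1 : Λ.d b.1 = Λ.d b'.1 := funext fun i => congrFun hd (Sum.inl i)
  have hd2 : b.2 = b'.2 := funext fun i => congrFun hd (Sum.inr i)
  refine Prod.ext (α.act_injective (natToInt a.2) ?_) hd2
  exact hΛ.left_cancel (src_eq_rng_act h) (src_eq_rng_act h')
    (by rw [α.map_d, α.map_d, hd1]) (congrArg Prod.fst hc)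

theorem InfPath.src_eq_rng {ι M : Type} {Λ : KGraphStr ι M} (x : InfPath Λ) {a b c : ι → ℕ}
    (hab : a ≤ b) (hbc : b ≤ c) : Λ.src (x.1 ⟨(a, b), hab⟩) = Λ.rng (x.1 ⟨(b, c), hbc⟩) :=
  (x.2.map_src ⟨(a, b), hab⟩).trans (x.2.map_rng ⟨(b, c), hbc⟩).symm

theorem InfPath.comp_eq {ι M : Type} {Λ : KGraphStr ι M} (x : InfPath Λ) {a b c : ι → ℕ}
    (hab : a ≤ b) (hbc : b ≤ c) :
    x.1 ⟨(a, c), hab.trans hbc⟩ = Λ.comp (x.1 ⟨(a, b), hab⟩) (x.1 ⟨(b, c), hbc⟩) := by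
  refine Eq.trans (congrArg x.1 ?_) (x.2.map_comp ⟨(a, b), hab⟩ ⟨(b, c), hbc⟩ rfl)
  exact Subtype.ext (Prod.ext rfl (sup_eq_right.mpr (hab.trans hbc)).symm)

theorem InfPath.initial_eq {ι M : Type} {l : ℕ} {Λ : KGraphStr ι M} (hΛ : Λ.IsKGraph)
    {α : ZlAction l Λ} (x : InfPath (crossedProd Λ α)) (p : ι → ℕ) (m : Fin l → ℕ) :
    x.1 ⟨(0, Sum.elim p m), pi_zero_le _⟩ =
      ((x.1 ⟨(0, Sum.elim p 0), pi_zero_le _⟩).1, m) := by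
  have hle : (Sum.elim p 0 : ι ⊕ Fin l → ℕ) ≤ Sum.elim p m := by
    rintro (i | i) <;> simp
  have hcomp := x.comp_eq (pi_zero_le (Sum.elim p 0)) hle
  have hsr := src_eq_rng_act (x.src_eq_rng (pi_zero_le (Sum.elim p 0)) hle)
  have hd0 := x.2.map_d ⟨(0, Sum.elim p m), pi_zero_le _⟩
  have hd2 := x.2.map_d ⟨(Sum.elim p 0, Sum.elim p m), hle⟩
  have hv : Λ.d (x.1 ⟨(Sum.elim p 0, Sum.elim p m), hle⟩).1 = 0 := by
    funext i
    simpa [crossedProd, Omega] using congrFun hd2 (Sum.inl i)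
  refine Prod.ext ?_ (funext fun i => ?_)
  · rw [hcomp]
    -- the second factor is a vertex, hence equal to the source of the first one
    rw [hΛ.rng_eq_of_d_eq_zero (by rw [α.map_d, hv])] at hsr
    change Λ.comp _ (α.act _ _) = _
    rw [← hsr, hΛ.comp_id]
  · simpa [crossedProd, Omega] using congrFun hd0 (Sum.inr i)

end KGraphStr

theorem stmt4 {k l : ℕ} {M : Type} (Λ : KGraphStr (Fin k) M) (hΛ : Λ.IsKGraph)
    (hrf : RowFinite Λ) (hns : NoSources Λ) (α : ZlAction l Λ)
    (y z : InfPath (crossedProd Λ α))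
    (h : ∀ p : Fin k → ℕ,
      y.1 ⟨(0, Sum.elim p 0), pi_zero_le _⟩ = z.1 ⟨(0, Sum.elim p 0), pi_zero_le _⟩) :
    y = z := by
  have h0 : ∀ n : Fin k ⊕ Fin l → ℕ, y.1 ⟨(0, n), pi_zero_le _⟩ = z.1 ⟨(0, n), pi_zero_le _⟩ := by
    intro n
    obtain ⟨p, m, rfl⟩ : ∃ p m, n = Sum.elim p m :=
      ⟨n ∘ Sum.inl, n ∘ Sum.inr, (Sum.elim_comp_inl_inr n).symm⟩
    rw [y.initial_eq hΛ, z.initial_eq hΛ, h]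
  refine Subtype.ext (funext ?_)
  rintro ⟨⟨a, b⟩, hab⟩
  refine crossedProd_left_cancel hΛ (y.src_eq_rng (pi_zero_le a) hab) ?_ ?_ ?_
  · rw [h0]
    exact z.src_eq_rng (pi_zero_le a) hab
  · exact (y.2.map_d ⟨(a, b), hab⟩).trans (z.2.map_d ⟨(a, b), hab⟩).symm
  · rw [← y.comp_eq (pi_zero_le a) hab, h0 a, ← z.comp_eq (pi_zero_le a) hab]
    exact h0 b
end

section
/- Let Λ be a row-finite k-graph with no sources and α an action of ℤ^l on Λ by automorphisms. Then Λ is α-cofinal if and only if the crossed-product (k+l)-graph Λ ×_α ℤ^l is cofinal. -/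
namespace KGraphStr

variable {ι M : Type}

/-- A rank-`ι` graph `Λ` is cofinal if for every infinite path `x` and every vertex `v`
there is a vertex `x(n)` on `x` with `vΛx(n) ≠ ∅`. -/
def Cofinal (Λ : KGraphStr ι M) : Prop :=
  ∀ x : InfPath Λ, ∀ v, Λ.d v = 0 →
    ∃ (n : ι → ℕ) (lam : M), Λ.rng lam = v ∧ Λ.src lam = x.vertex n

/-- `Λ` is `α`-cofinal: for every vertex `v` and every infinite path `x` there are
`p ∈ ℕ^k` and `m, n ∈ ℕ^l` with `α_{-m}(v) Λ α_{-n}(x(p)) ≠ ∅`. -/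
def AlphaCofinal {l : ℕ} (Λ : KGraphStr ι M) (α : ZlAction l Λ) : Prop :=
  ∀ v, Λ.d v = 0 → ∀ x : InfPath Λ,
    ∃ (p : ι → ℕ) (m n : Fin l → ℕ) (lam : M),
      Λ.rng lam = α.act (-(natToInt m)) v ∧
      Λ.src lam = α.act (-(natToInt n)) (x.vertex p)

end KGraphStr

namespace KGraphStr

variable {ι M : Type} {l : ℕ}

@[simp] theorem natToInt_zero : natToInt (0 : Fin l → ℕ) = 0 := by
  funext i; simp [natToInt]

theorem natToInt_sub {m n : Fin l → ℕ} (h : m ≤ n) :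
    natToInt (n - m) = natToInt n - natToInt m := by
  funext i
  have := h i
  simp [natToInt, Nat.cast_sub this]

theorem ZlAction.act_neg_cancel {Λ : KGraphStr ι M} (α : ZlAction l Λ) (m : Fin l → ℤ) (μ : M) :
    α.act (-m) (α.act m μ) = μ := by
  rw [← α.act_add, neg_add_cancel, α.act_zero]

theorem ZlAction.act_cancel_neg {Λ : KGraphStr ι M} (α : ZlAction l Λ) (m : Fin l → ℤ) (μ : M) :
    α.act m (α.act (-m) μ) = μ := by
  rw [← α.act_add, add_neg_cancel, α.act_zero]

/-- Uniqueness of factorisations, applied to `μ = r(μ)μ = μs(μ)`, shows that the morphisms of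
degree `0` are exactly the identities. -/
theorem IsKGraph.rng_eq_self {Λ : KGraphStr ι M} (hΛ : Λ.IsKGraph) {μ : M} (h : Λ.d μ = 0) :
    Λ.rng μ = μ := by
  obtain ⟨p, -, hp⟩ := hΛ.factorisation μ 0 0 (by simpa using h)
  have h1 := hp (Λ.rng μ, μ) ⟨hΛ.d_rng _, h, hΛ.src_rng _, hΛ.id_comp _⟩
  have h2 := hp (μ, Λ.src μ) ⟨h, hΛ.d_src _, (hΛ.rng_src _).symm, hΛ.comp_id _⟩
  exact congrArg Prod.fst (h1.trans h2.symm)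

theorem OmegaMor.ext' {q q' : OmegaMor ι} (h₁ : q.1.1 = q'.1.1) (h₂ : q.1.2 = q'.1.2) : q = q' :=
  Subtype.ext (Prod.ext h₁ h₂)

/-- The inclusion of `Ω_ι` in the rank-`ι ⊕ Fin l` graph `Ω`, at height `0`. -/
def OmegaMor.inl (l : ℕ) (q : OmegaMor ι) : OmegaMor (ι ⊕ Fin l) :=
  ⟨(Sum.elim q.1.1 0, Sum.elim q.1.2 0), by
    rintro (i | i)
    · exact q.2 i
    · exact le_rfl⟩

/-- The projection of the rank-`ι ⊕ Fin l` graph `Ω` onto `Ω_ι`. -/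
def OmegaMor.fst (q : OmegaMor (ι ⊕ Fin l)) : OmegaMor ι :=
  ⟨(q.1.1 ∘ Sum.inl, q.1.2 ∘ Sum.inl), fun i => q.2 (Sum.inl i)⟩

/-- The restriction to `ℕ^ι × {0}` of an infinite path in the crossed product. -/
def InfPath.restrict {Λ : KGraphStr ι M} {α : ZlAction l Λ} (y : InfPath (crossedProd Λ α)) :
    InfPath Λ := by
  refine ⟨fun q => (y.1 (q.inl l)).1, ?_⟩
  have hy := y.2
  have hz : ∀ q : OmegaMor ι, (y.1 (q.inl l)).2 = 0 := fun q => by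
    funext i
    simpa [crossedProd, Omega, OmegaMor.inl] using congrFun (hy.map_d (q.inl l)) (Sum.inr i)
  refine ⟨fun q => ?_, fun q => ?_, fun q => ?_, fun q q' h => ?_⟩
  · funext i
    exact congrFun (hy.map_d (q.inl l)) (Sum.inl i)
  · exact congrArg Prod.fst (hy.map_rng (q.inl l))
  · have := congrArg Prod.fst (hy.map_src (q.inl l))
    simp only [crossedProd, hz, natToInt_zero, neg_zero, α.act_zero] at this
    exact this
  · have hq : q.1.2 = q'.1.1 := congrArg (fun t => t.1.1) h
    have hc := congrArg Prod.fst (hy.map_comp (q.inl l) (q'.inl l)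
      (OmegaMor.ext' (by simp [Omega, OmegaMor.inl, hq]) (by simp [Omega, OmegaMor.inl, hq])))
    simp only [crossedProd, hz, natToInt_zero, α.act_zero] at hc
    rw [← hc]
    refine congrArg (fun t => (y.1 t).1) (OmegaMor.ext' rfl ?_)
    funext i
    rcases i with i | i <;> simp [Omega, OmegaMor.inl]

theorem InfPath.vertex_restrict {Λ : KGraphStr ι M} (hΛ : Λ.IsKGraph) {α : ZlAction l Λ}
    (y : InfPath (crossedProd Λ α)) (p : ι → ℕ) (n : Fin l → ℕ) :
    y.vertex (Sum.elim p n) = (α.act (-(natToInt n)) (y.restrict.vertex p), 0) := by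
  let q : OmegaMor (ι ⊕ Fin l) := ⟨(Sum.elim p 0, Sum.elim p n), by
    rintro (i | i)
    · exact le_rfl
    · exact Nat.zero_le _⟩
  have hd := y.2.map_d q
  have hn : (y.1 q).2 = n := by
    funext i
    simpa [crossedProd, Omega, q] using congrFun hd (Sum.inr i)
  have h0 : Λ.d (y.1 q).1 = 0 := by
    funext i
    simpa [crossedProd, Omega, q] using congrFun hd (Sum.inl i)
  have hr : Λ.rng (y.1 q).1 = y.restrict.vertex p := congrArg Prod.fst (y.2.map_rng q)
  have he := hΛ.rng_eq_self h0
  have hs : Λ.src (y.1 q).1 = (y.1 q).1 := by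
    rw [← he, hΛ.src_rng]
  have := y.2.map_src q
  rw [show y.vertex (Sum.elim p n) = y.1 ((Omega _).src q) from rfl, ← this]
  simp only [crossedProd, hn, hs, ← hr, he]

/-- The infinite path `((p,m),(q,n)) ↦ (α_{-m}(x(p,q)), n - m)` of the crossed product induced by
an infinite path `x` of `Λ`. -/
def InfPath.induce {Λ : KGraphStr ι M} (α : ZlAction l Λ) (x : InfPath Λ) :
    InfPath (crossedProd Λ α) := by
  refine ⟨fun q => (α.act (-(natToInt (q.1.1 ∘ Sum.inr))) (x.1 q.fst),
    q.1.2 ∘ Sum.inr - q.1.1 ∘ Sum.inr), ?_⟩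
  have hx := x.2
  refine ⟨fun q => ?_, fun q => ?_, fun q => ?_, fun q q' h => ?_⟩
  · funext i
    rcases i with i | i
    · simp only [crossedProd, Sum.elim_inl, α.map_d, hx.map_d]
      rfl
    · rfl
  · refine Prod.ext ?_ ?_
    · simp only [crossedProd, α.map_rng, hx.map_rng]
      rfl
    · funext i; simp [crossedProd, Omega]
  · refine Prod.ext ?_ ?_
    · have hle : q.1.1 ∘ Sum.inr ≤ q.1.2 ∘ Sum.inr := fun i => q.2 (Sum.inr i)
      simp only [crossedProd, α.map_src, hx.map_src, ← α.act_add, natToInt_sub hle]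
      rw [show ∀ a b : Fin l → ℤ, -(b - a) + -a = -b from fun a b => by abel]
      rfl
    · funext i; simp [crossedProd, Omega]
  · have hq : q.1.2 = q'.1.1 := congrArg (fun t => t.1.1) h
    have hle : q.1.1 ∘ Sum.inr ≤ q.1.2 ∘ Sum.inr := fun i => q.2 (Sum.inr i)
    have hcomp : (Omega ι).src q.fst = (Omega ι).rng q'.fst :=
      OmegaMor.ext' (by simp [Omega, OmegaMor.fst, hq]) (by simp [Omega, OmegaMor.fst, hq])
    refine Prod.ext ?_ ?_
    · simp only [crossedProd, ← α.act_add, natToInt_sub hle, ← hq]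
      rw [show ∀ a b : Fin l → ℤ, (b - a) + -b = -a from fun a b => by abel,
        ← α.map_comp _ _ _ (by rw [hx.map_src, hx.map_rng, hcomp]), ← hx.map_comp _ _ hcomp]
      rfl
    · funext i
      have h1 : q.1.1 (Sum.inr i) ≤ q.1.2 (Sum.inr i) := q.2 (Sum.inr i)
      have h2 : q'.1.1 (Sum.inr i) ≤ q'.1.2 (Sum.inr i) := q'.2 (Sum.inr i)
      have h3 : q.1.2 (Sum.inr i) = q'.1.1 (Sum.inr i) := congrFun hq (Sum.inr i)
      change max (q.1.1 (Sum.inr i)) (q'.1.2 (Sum.inr i)) - q.1.1 (Sum.inr i) =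
        (q.1.2 (Sum.inr i) - q.1.1 (Sum.inr i)) + (q'.1.2 (Sum.inr i) - q'.1.1 (Sum.inr i))
      omega

theorem InfPath.vertex_induce {Λ : KGraphStr ι M} (α : ZlAction l Λ) (x : InfPath Λ)
    (N : ι ⊕ Fin l → ℕ) :
    ((x.induce α).vertex N).1 = α.act (-(natToInt (N ∘ Sum.inr))) (x.vertex (N ∘ Sum.inl)) :=
  rfl

end KGraphStr

open KGraphStr

theorem stmt7 {k l : ℕ} {M : Type} (Λ : KGraphStr (Fin k) M) (hΛ : Λ.IsKGraph)
    (hrf : RowFinite Λ) (hns : NoSources Λ) (α : ZlAction l Λ) :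
    AlphaCofinal Λ α ↔ Cofinal (crossedProd Λ α) := by
  constructor
  · rintro h y ⟨v, j⟩ hv
    have hv0 : Λ.d v = 0 := by
      funext i
      exact congrFun hv (Sum.inl i)
    have hj : j = 0 := by
      funext i
      exact congrFun hv (Sum.inr i)
    subst hj
    obtain ⟨p, m, n, lam, hr, hs⟩ := h v hv0 y.restrict
    refine ⟨Sum.elim p n, (α.act (natToInt m) lam, m), ?_, ?_⟩
    · simp only [crossedProd, α.map_rng, hr, α.act_cancel_neg]
    · rw [y.vertex_restrict hΛ]
      simp only [crossedProd, α.map_src, hs, α.act_neg_cancel]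
  · intro h v hv x
    obtain ⟨N, ⟨μ, j⟩, hr, hs⟩ := h (x.induce α) (v, 0) (by
      funext i
      rcases i with i | i
      · exact congrFun hv i
      · rfl)
    refine ⟨N ∘ Sum.inl, j, N ∘ Sum.inr, α.act (-(natToInt j)) μ, ?_, ?_⟩
    · rw [α.map_rng]
      exact congrArg _ (congrArg Prod.fst hr)
    · rw [α.map_src, ← x.vertex_induce α]
      exact congrArg Prod.fst hs
end

section
/- Let V be a set and β a bijection of V all of whose orbits C(v) = {β^n(v) : n ∈ ℤ} are finite, and let 𝒞 denote the set of orbits. Let β_* be the automorphism of ℤV determined by β_*(δ_v) = δ_{β^{-1}(v)}, and let ψ = 1 − β_*. Then: (a) ker ψ is the subgroup of ℤV generated by the indicator functions 1_C of the orbits C ∈ 𝒞, and there is a group isomorphism θ_B : ker ψ → ℤ𝒞 with θ_B(1_C) = δ_C for all C ∈ 𝒞; (b) there is a group isomorphism θ_A : coker ψ → ℤ𝒞 with θ_A(δ_v + ψ(ℤV)) = δ_{C(v)} for all v ∈ V; in particular δ_v − δ_w ∈ ψ(ℤV) if and only if C(v) = C(w). -/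
/-!
Coordinatewise, `betaStar β x v = x (β v)`, so the kernel of `1 - β_*` consists of the finitely
supported functions that are constant on orbits. Such a function is `∑ C, x (r C) • 1_C` for any
choice `r` of orbit representatives, and the `1_C` are linearly independent because
`∑ C, f C • 1_C` takes the value `f C(v)` at `v` (`linearCombination_orbitIndicator_apply`). Hence
`f ↦ ∑ C, f C • 1_C` is an isomorphism from `ℤ𝒞` onto the kernel.

For the cokernel, consider the surjection `ℤV → ℤ𝒞` induced by `v ↦ C(v)`. It kills the image of
`1 - β_*`, since `v` and `β⁻¹ v` lie in the same orbit. Conversely `δ_v - δ_{β⁻¹ v}` is in the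
image, so by telescoping `δ_v - δ_w` is in the image whenever `C(v) = C(w)`. Modulo the image every
`x` is therefore congruent to a combination of the `δ_{r C}` determined by its push-forward to
`ℤ𝒞`, and the kernel of the surjection is exactly the image (`range_eq_ker_mapOrbit`).
-/

/-- The orbit `C(v) = {β^n(v) : n ∈ ℤ}` of `v` under the bijection `β`. -/
def orbit {V : Type} (β : Equiv.Perm V) (v : V) : Set V := {w | ∃ n : ℤ, (β ^ n) v = w}

/-- The collection `𝒞` of orbits of `β`. -/
def OrbitType {V : Type} (β : Equiv.Perm V) : Type := {C : Set V // ∃ v, C = orbit β v}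

/-- The orbit of `v`, as an element of `𝒞`. -/
def orbitOf {V : Type} (β : Equiv.Perm V) (v : V) : OrbitType β := ⟨orbit β v, v, rfl⟩

/-- The indicator function `1_C = Σ_{v ∈ C} δ_v ∈ ℤV` of a (finite) orbit `C`. -/
noncomputable def orbitIndicator {V : Type} (β : Equiv.Perm V)
    (hfin : ∀ v, (orbit β v).Finite) (C : OrbitType β) : V →₀ ℤ :=
  ∑ v ∈ (show C.1.Finite by obtain ⟨v, hv⟩ := C.2; rw [hv]; exact hfin v).toFinset,
    Finsupp.single v 1

/-- The automorphism `β_*` of `ℤV` determined by `β_*(δ_v) = δ_{β⁻¹ v}`. -/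
noncomputable def betaStar {V : Type} (β : Equiv.Perm V) : (V →₀ ℤ) →ₗ[ℤ] (V →₀ ℤ) :=
  (Finsupp.domLCongr (β.symm : V ≃ V)).toLinearMap

theorem mem_orbit_self {V : Type} (β : Equiv.Perm V) (v : V) : v ∈ orbit β v := ⟨0, by simp⟩

theorem orbit_eq_of_mem {V : Type} {β : Equiv.Perm V} {v w : V} (h : w ∈ orbit β v) :
    orbit β w = orbit β v := by
  obtain ⟨n, rfl⟩ := h
  ext u
  constructor
  · rintro ⟨m, rfl⟩
    exact ⟨m + n, by rw [zpow_add, Equiv.Perm.mul_apply]⟩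
  · rintro ⟨m, rfl⟩
    exact ⟨m - n, by rw [← Equiv.Perm.mul_apply, ← zpow_add, sub_add_cancel]⟩

theorem orbitOf_eq_iff {V : Type} {β : Equiv.Perm V} {v w : V} :
    orbitOf β v = orbitOf β w ↔ orbit β v = orbit β w :=
  Subtype.ext_iff

theorem orbitOf_apply {V : Type} (β : Equiv.Perm V) (v : V) :
    orbitOf β (β v) = orbitOf β v :=
  orbitOf_eq_iff.2 (orbit_eq_of_mem ⟨1, by simp⟩)

theorem orbitOf_symm_apply {V : Type} (β : Equiv.Perm V) (v : V) :
    orbitOf β (β.symm v) = orbitOf β v := by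
  simpa using (orbitOf_apply β (β.symm v)).symm

theorem mem_orbitType_iff {V : Type} {β : Equiv.Perm V} (C : OrbitType β) (v : V) :
    v ∈ C.1 ↔ C = orbitOf β v := by
  obtain ⟨_, u, rfl⟩ := C
  constructor
  · intro h
    exact Subtype.ext (orbit_eq_of_mem h).symm
  · intro h
    have h' : orbit β u = orbit β v := congrArg Subtype.val h
    change v ∈ orbit β u
    rw [h']
    exact mem_orbit_self β v

/-- A chosen representative of each orbit. -/
noncomputable def orbitRep {V : Type} (β : Equiv.Perm V) (C : OrbitType β) : V := C.2.choose

theorem orbitOf_orbitRep {V : Type} (β : Equiv.Perm V) (C : OrbitType β) :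
    orbitOf β (orbitRep β C) = C :=
  Subtype.ext C.2.choose_spec.symm

theorem betaStar_apply {V : Type} (β : Equiv.Perm V) (x : V →₀ ℤ) (v : V) :
    betaStar β x v = x (β v) := by
  simp [betaStar]

theorem betaStar_single {V : Type} (β : Equiv.Perm V) (v : V) (a : ℤ) :
    betaStar β (Finsupp.single v a) = Finsupp.single (β.symm v) a := by
  simp [betaStar]

open Classical in
theorem orbitIndicator_apply {V : Type} (β : Equiv.Perm V)
    (hfin : ∀ v, (orbit β v).Finite) (C : OrbitType β) (v : V) :
    orbitIndicator β hfin C v = if C = orbitOf β v then 1 else 0 := by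
  simp [orbitIndicator, Finsupp.finsetSum_apply, Finsupp.single_apply, mem_orbitType_iff]

theorem linearCombination_orbitIndicator_apply {V : Type} (β : Equiv.Perm V)
    (hfin : ∀ v, (orbit β v).Finite) (f : OrbitType β →₀ ℤ) (v : V) :
    Finsupp.linearCombination ℤ (orbitIndicator β hfin) f v = f (orbitOf β v) := by
  classical
  simp only [Finsupp.linearCombination_apply, Finsupp.sum, Finsupp.finsetSum_apply,
    Finsupp.smul_apply, orbitIndicator_apply]
  simp +contextual

theorem linearCombination_orbitIndicator_injective {V : Type} (β : Equiv.Perm V)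
    (hfin : ∀ v, (orbit β v).Finite) :
    Function.Injective (Finsupp.linearCombination ℤ (orbitIndicator β hfin)) := by
  intro f g h
  ext C
  have := DFunLike.congr_fun h (orbitRep β C)
  simpa only [linearCombination_orbitIndicator_apply, orbitOf_orbitRep] using this

theorem mem_ker_iff {V : Type} (β : Equiv.Perm V) (x : V →₀ ℤ) :
    x ∈ LinearMap.ker (LinearMap.id - betaStar β) ↔ ∀ v, x (β v) = x v := by
  rw [LinearMap.mem_ker, LinearMap.sub_apply, sub_eq_zero, DFunLike.ext_iff]
  simp only [LinearMap.id_apply, betaStar_apply]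
  exact forall_congr' fun v => eq_comm

theorem eq_of_orbitOf_eq {V : Type} {β : Equiv.Perm V} {x : V →₀ ℤ}
    (hx : ∀ v, x (β v) = x v) {v w : V} (h : orbitOf β v = orbitOf β w) : x v = x w := by
  have hw : w ∈ orbit β v := by
    rw [orbitOf_eq_iff.1 h]
    exact mem_orbit_self β w
  obtain ⟨n, rfl⟩ := hw
  clear h
  induction n with
  | zero => simp
  | succ n ih => rw [add_comm, zpow_add, Equiv.Perm.mul_apply, zpow_one, hx, ih]
  | pred n ih =>
    rw [← hx ((β ^ (-(n : ℤ) - 1)) v), ih, ← Equiv.Perm.mul_apply, ← zpow_one_add]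
    congr 3
    ring

theorem range_linearCombination_eq_ker {V : Type} (β : Equiv.Perm V)
    (hfin : ∀ v, (orbit β v).Finite) :
    LinearMap.range (Finsupp.linearCombination ℤ (orbitIndicator β hfin)) =
      LinearMap.ker (LinearMap.id - betaStar β) := by
  ext x
  rw [mem_ker_iff]
  constructor
  · rintro ⟨f, rfl⟩ v
    rw [linearCombination_orbitIndicator_apply, linearCombination_orbitIndicator_apply,
      orbitOf_apply]
  · intro hx
    have hinj : Function.Injective (orbitRep β) :=
      Function.LeftInverse.injective (orbitOf_orbitRep β)
    refine ⟨Finsupp.comapDomain (orbitRep β) x hinj.injOn, ?_⟩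
    ext v
    rw [linearCombination_orbitIndicator_apply, Finsupp.comapDomain_apply]
    exact eq_of_orbitOf_eq hx (orbitOf_orbitRep β _)

theorem single_sub_single_mem_range {V : Type} {β : Equiv.Perm V} {v w : V}
    (h : orbitOf β v = orbitOf β w) :
    Finsupp.single v 1 - Finsupp.single w 1 ∈
      LinearMap.range (LinearMap.id - betaStar β) := by
  have hstep : ∀ u : V, Finsupp.single (β u) 1 - Finsupp.single u 1 ∈
      LinearMap.range (LinearMap.id - betaStar β) := fun u =>
    ⟨Finsupp.single (β u) 1, by simp [betaStar_single]⟩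
  have hw : v ∈ orbit β w := by
    rw [← orbitOf_eq_iff.1 h]
    exact mem_orbit_self β v
  obtain ⟨n, rfl⟩ := hw
  clear h
  induction n with
  | zero => simp
  | succ n ih =>
    rw [add_comm, zpow_add, Equiv.Perm.mul_apply, zpow_one]
    simpa using add_mem (hstep ((β ^ (n : ℤ)) w)) ih
  | pred n ih =>
    have h := hstep ((β ^ (-(n : ℤ) - 1)) w)
    rw [← Equiv.Perm.mul_apply, ← zpow_one_add, add_sub_cancel] at h
    simpa using sub_mem ih h

/-- The map `ℤV → ℤ𝒞` sending `δ_v` to `δ_{C(v)}`. -/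
noncomputable def mapOrbit {V : Type} (β : Equiv.Perm V) :
    (V →₀ ℤ) →ₗ[ℤ] (OrbitType β →₀ ℤ) :=
  Finsupp.lmapDomain ℤ ℤ (orbitOf β)

theorem mapOrbit_single {V : Type} (β : Equiv.Perm V) (v : V) (a : ℤ) :
    mapOrbit β (Finsupp.single v a) = Finsupp.single (orbitOf β v) a := by
  simp [mapOrbit]

theorem mapOrbit_surjective {V : Type} (β : Equiv.Perm V) :
    Function.Surjective (mapOrbit β) :=
  Finsupp.mapDomain_surjective fun C => ⟨orbitRep β C, orbitOf_orbitRep β C⟩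

theorem range_eq_ker_mapOrbit {V : Type} (β : Equiv.Perm V) :
    LinearMap.range (LinearMap.id - betaStar β) = LinearMap.ker (mapOrbit β) := by
  apply le_antisymm
  · rw [LinearMap.range_le_ker_iff]
    ext v : 2
    simp [betaStar_single, mapOrbit_single, orbitOf_symm_apply]
  · intro x hx
    -- Moving every `δ_v` to the representative of its orbit changes `x` by an element of the image.
    have key : ∀ y : V →₀ ℤ, y - Finsupp.lmapDomain ℤ ℤ (orbitRep β) (mapOrbit β y) ∈
        LinearMap.range (LinearMap.id - betaStar β) := by
      intro y
      induction y using Finsupp.induction_linear with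
      | zero => simp
      | add f g hf hg =>
        rw [map_add, map_add, add_sub_add_comm]
        exact add_mem hf hg
      | single v a =>
        have h := Submodule.smul_mem _ a
          (single_sub_single_mem_range (orbitOf_orbitRep β (orbitOf β v)).symm)
        simpa [smul_sub, mapOrbit_single] using h
    have h := key x
    rwa [LinearMap.mem_ker.1 hx, map_zero, sub_zero] at h

theorem stmt17 {V : Type} (β : Equiv.Perm V) (hfin : ∀ v, (orbit β v).Finite) :
    -- (a) `ker(1 - β_*)` is the subgroup of `ℤV` generated by the orbit indicators `1_C`,
    LinearMap.ker (LinearMap.id - betaStar β) =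
      Submodule.span ℤ (Set.range (orbitIndicator β hfin)) ∧
    -- and there is an isomorphism `θ_B : ker(1 - β_*) ≃ ℤ𝒞` with `θ_B(1_C) = δ_C`
    (∃ θB : LinearMap.ker (LinearMap.id - betaStar β) ≃ₗ[ℤ] (OrbitType β →₀ ℤ),
      ∀ (x : LinearMap.ker (LinearMap.id - betaStar β)) (C : OrbitType β),
        (x : V →₀ ℤ) = orbitIndicator β hfin C → θB x = Finsupp.single C 1) ∧
    -- (b) there is an isomorphism `θ_A : coker(1 - β_*) ≃ ℤ𝒞` with
    -- `θ_A(δ_v + im(1 - β_*)) = δ_{C(v)}`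
    (∃ θA : ((V →₀ ℤ) ⧸ LinearMap.range (LinearMap.id - betaStar β)) ≃ₗ[ℤ]
        (OrbitType β →₀ ℤ),
      ∀ v : V, θA (Submodule.Quotient.mk (Finsupp.single v 1)) =
        Finsupp.single (orbitOf β v) 1) ∧
    -- in particular `δ_v - δ_w ∈ im(1 - β_*)` iff `C(v) = C(w)`
    (∀ v w : V, (Finsupp.single v 1 - Finsupp.single w 1 ∈
        LinearMap.range (LinearMap.id - betaStar β)) ↔ orbit β v = orbit β w) := by
  refine ⟨?_, ?_, ?_, ?_⟩
  · rw [← range_linearCombination_eq_ker β hfin, Finsupp.range_linearCombination]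
  · refine ⟨((LinearEquiv.ofInjective _ (linearCombination_orbitIndicator_injective β hfin)).trans
      (LinearEquiv.ofEq _ _ (range_linearCombination_eq_ker β hfin))).symm, ?_⟩
    intro x C hx
    rw [LinearEquiv.symm_apply_eq]
    apply Subtype.ext
    simp [hx]
  · refine ⟨(Submodule.quotEquivOfEq _ _ (range_eq_ker_mapOrbit β)).trans
      ((mapOrbit β).quotKerEquivOfSurjective (mapOrbit_surjective β)), ?_⟩
    intro v
    exact mapOrbit_single β v 1
  · intro v w
    rw [← orbitOf_eq_iff]
    refine ⟨fun h => ?_, single_sub_single_mem_range⟩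
    rw [range_eq_ker_mapOrbit, LinearMap.mem_ker, map_sub, mapOrbit_single, mapOrbit_single,
      sub_eq_zero] at h
    exact Finsupp.single_left_injective one_ne_zero h
end

section
/- Let E be a row-finite directed graph and let α be an action of ℤ by automorphisms of E such that the orbit C(v) = {α_n(v) : n ∈ ℤ} of each vertex is finite. For orbits C₁, C₂ let C₁E^1C₂ := {e ∈ E^1 : r(e) ∈ C₁, s(e) ∈ C₂}. Then C₁E^1C₂ is finite, and for every v₁ ∈ C₁ and v₂ ∈ C₂ one has |C₁E^1C₂| = |C₁| · |v₁E^1C₂| = |C₂| · |C₁E^1v₂|, where v₁E^1C₂ := {e : r(e) = v₁, s(e) ∈ C₂} and C₁E^1v₂ := {e : r(e) ∈ C₁, s(e) = v₂}. In particular |v₁E^1C₂| is independent of the choice of v₁ ∈ C₁ and |C₁E^1v₂| is independent of the choice of v₂ ∈ C₂. -/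
/-!
The argument is orbit counting for an equivariant map. Let `f : E¹ → E⁰` intertwine the two
`ℤ`-actions and let `S ⊆ E¹` be invariant. For `w' = α_n(w)`, the bijection `α_n` of `E¹` carries
the fibre `{e ∈ S | f e = w}` onto `{e ∈ S | f e = w'}` (`fiberEquiv`), so all fibres of `f` over
an orbit `C` have the same cardinality, and `{e ∈ S | f e ∈ C}`, the disjoint union of these
fibres, has cardinality `|C|` times that of any one of them (`card_eq_mul_card_fiber`). The
theorem is the case `f = r`, `S = s⁻¹(C₂)` together with the case `f = s`, `S = r⁻¹(C₁)`.
Finiteness of `C₁E¹C₂` holds because it lies in the union of the finite sets `r⁻¹(w)` over the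
finite set `C₁`.
-/

/-- A directed graph: vertices, edges, and range and source maps. -/
structure DirGraph where
  V : Type
  E : Type
  r : E → V
  s : E → V

/-- An action of `ℤ` on a directed graph by automorphisms: a group homomorphism
`n ↦ α_n` into the automorphism group of the graph (each `α_n` is bijective on vertices
and on edges, with inverse `α_{-n}`, and commutes with the range and source maps). -/
structure ZGraphAction (G : DirGraph) where
  onV : ℤ → G.V → G.V
  onE : ℤ → G.E → G.E
  onV_zero : ∀ v, onV 0 v = v
  onV_add : ∀ m n v, onV (m + n) v = onV m (onV n v)
  onE_zero : ∀ e, onE 0 e = e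
  onE_add : ∀ m n e, onE (m + n) e = onE m (onE n e)
  map_r : ∀ n e, G.r (onE n e) = onV n (G.r e)
  map_s : ∀ n e, G.s (onE n e) = onV n (G.s e)

/-- The orbit `C(v) = {α_n(v) : n ∈ ℤ}` of the vertex `v`. -/
def vorbit {G : DirGraph} (a : ZGraphAction G) (v : G.V) : Set G.V :=
  {w | ∃ n : ℤ, a.onV n v = w}

/-- The collection `𝒞` of vertex orbits. -/
def VOrbitType {G : DirGraph} (a : ZGraphAction G) : Type :=
  {C : Set G.V // ∃ v, C = vorbit a v}

namespace ZGraphAction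

variable {G : DirGraph} (a : ZGraphAction G)

theorem onE_neg_onE (n : ℤ) (e : G.E) : a.onE (-n) (a.onE n e) = e := by
  rw [← a.onE_add, neg_add_cancel, a.onE_zero]

theorem onE_onE_neg (n : ℤ) (e : G.E) : a.onE n (a.onE (-n) e) = e := by
  rw [← a.onE_add, add_neg_cancel, a.onE_zero]

theorem onV_neg_onV (n : ℤ) (v : G.V) : a.onV (-n) (a.onV n v) = v := by
  rw [← a.onV_add, neg_add_cancel, a.onV_zero]

theorem onV_mem_vorbit {v w : G.V} (n : ℤ) (h : w ∈ vorbit a v) : a.onV n w ∈ vorbit a v := by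
  obtain ⟨m, rfl⟩ := h
  exact ⟨n + m, a.onV_add n m v⟩

theorem exists_onV_eq {v w w' : G.V} (h : w ∈ vorbit a v) (h' : w' ∈ vorbit a v) :
    ∃ n : ℤ, a.onV n w = w' := by
  obtain ⟨m, rfl⟩ := h
  obtain ⟨m', rfl⟩ := h'
  exact ⟨m' + -m, by rw [a.onV_add, a.onV_neg_onV]⟩

/-- The bijection, given by `α_n`, between the fibres in an invariant set `S` of an equivariant
map `f` over `w` and over `α_n(w)`. -/
def fiberEquiv {f : G.E → G.V} (hf : ∀ n e, f (a.onE n e) = a.onV n (f e))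
    {S : Set G.E} (hS : ∀ n, ∀ e ∈ S, a.onE n e ∈ S)
    {w w' : G.V} (n : ℤ) (h : a.onV n w = w') :
    {e | e ∈ S ∧ f e = w} ≃ {e | e ∈ S ∧ f e = w'} where
  toFun e := ⟨a.onE n e.1, hS n _ e.2.1, by rw [hf, e.2.2, h]⟩
  invFun e := ⟨a.onE (-n) e.1, hS (-n) _ e.2.1, by rw [hf, e.2.2, ← h, a.onV_neg_onV]⟩
  left_inv e := Subtype.ext (a.onE_neg_onE n e.1)
  right_inv e := Subtype.ext (a.onE_onE_neg n e.1)

theorem card_fiber_eq {f : G.E → G.V} (hf : ∀ n e, f (a.onE n e) = a.onV n (f e))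
    {S : Set G.E} (hS : ∀ n, ∀ e ∈ S, a.onE n e ∈ S)
    {v w w' : G.V} (h : w ∈ vorbit a v) (h' : w' ∈ vorbit a v) :
    Nat.card {e | e ∈ S ∧ f e = w} = Nat.card {e | e ∈ S ∧ f e = w'} := by
  obtain ⟨n, hn⟩ := a.exists_onV_eq h h'
  exact Nat.card_congr (a.fiberEquiv hf hS n hn)

/-- The part of an invariant set lying over an orbit is equinumerous with the product of the
orbit and any one fibre. No finiteness is needed, since `Nat.card` is multiplicative on all
products (with the value `0` on infinite types). -/
theorem card_eq_mul_card_fiber {f : G.E → G.V} (hf : ∀ n e, f (a.onE n e) = a.onV n (f e))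
    {S : Set G.E} (hS : ∀ n, ∀ e ∈ S, a.onE n e ∈ S)
    {v w : G.V} (h : w ∈ vorbit a v) :
    Nat.card {e | e ∈ S ∧ f e ∈ vorbit a v} =
      Nat.card (vorbit a v) * Nat.card {e | e ∈ S ∧ f e = w} := by
  rw [← Nat.card_prod]
  -- for each point `c` of the orbit, an element `n c` of `ℤ` moving `w` to `c`
  choose n hn using fun c : vorbit a v => a.exists_onV_eq h c.2
  refine (Nat.card_congr (Equiv.ofBijective (fun p : vorbit a v × {e | e ∈ S ∧ f e = w} =>
    (⟨a.onE (n p.1) p.2.1, hS _ _ p.2.2.1, by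
      rw [hf, p.2.2.2, hn]; exact p.1.2⟩ : {e | e ∈ S ∧ f e ∈ vorbit a v})) ⟨?_, ?_⟩)).symm
  · rintro ⟨c, e, he⟩ ⟨c', e', he'⟩ hee
    have hee : a.onE (n c) e = a.onE (n c') e' := congrArg Subtype.val hee
    -- applying `f` recovers the point of the orbit
    have hc : c = c' := by
      have := congrArg f hee
      rw [hf, hf, he.2, he'.2, hn, hn] at this
      exact Subtype.ext this
    subst hc
    have he_eq : e = e' := by rw [← a.onE_neg_onE (n c) e, hee, a.onE_neg_onE]
    subst he_eq
    rfl
  · rintro ⟨e, heS, hev⟩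
    exact ⟨⟨⟨f e, hev⟩, (a.fiberEquiv hf hS (n ⟨f e, hev⟩) (hn _)).symm ⟨e, heS, rfl⟩⟩,
      Subtype.ext (a.onE_onE_neg _ e)⟩

end ZGraphAction

theorem stmt18 (G : DirGraph) (hrow : ∀ v, {e | G.r e = v}.Finite)
    (a : ZGraphAction G) (hfin : ∀ v, (vorbit a v).Finite) :
    ∀ v₁ v₂ : G.V,
      -- `C₁ E^1 C₂` is finite
      {e | G.r e ∈ vorbit a v₁ ∧ G.s e ∈ vorbit a v₂}.Finite ∧
      -- `|C₁E^1C₂| = |C₁| · |w₁E^1C₂|` for every `w₁ ∈ C₁`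
      (∀ w₁ ∈ vorbit a v₁,
        Nat.card {e | G.r e ∈ vorbit a v₁ ∧ G.s e ∈ vorbit a v₂} =
          Nat.card (vorbit a v₁) *
            Nat.card {e | G.r e = w₁ ∧ G.s e ∈ vorbit a v₂}) ∧
      -- `|C₁E^1C₂| = |C₂| · |C₁E^1w₂|` for every `w₂ ∈ C₂`
      (∀ w₂ ∈ vorbit a v₂,
        Nat.card {e | G.r e ∈ vorbit a v₁ ∧ G.s e ∈ vorbit a v₂} =
          Nat.card (vorbit a v₂) *
            Nat.card {e | G.r e ∈ vorbit a v₁ ∧ G.s e = w₂}) ∧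
      -- in particular `|w₁E^1C₂|` does not depend on the choice of `w₁ ∈ C₁`
      (∀ w₁ ∈ vorbit a v₁, ∀ w₁' ∈ vorbit a v₁,
        Nat.card {e | G.r e = w₁ ∧ G.s e ∈ vorbit a v₂} =
          Nat.card {e | G.r e = w₁' ∧ G.s e ∈ vorbit a v₂}) ∧
      -- and `|C₁E^1w₂|` does not depend on the choice of `w₂ ∈ C₂`
      (∀ w₂ ∈ vorbit a v₂, ∀ w₂' ∈ vorbit a v₂,
        Nat.card {e | G.r e ∈ vorbit a v₁ ∧ G.s e = w₂} =
          Nat.card {e | G.r e ∈ vorbit a v₁ ∧ G.s e = w₂'}) := by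
  intro v₁ v₂
  have hS₁ : ∀ n, ∀ e ∈ {e | G.r e ∈ vorbit a v₁}, a.onE n e ∈ {e | G.r e ∈ vorbit a v₁} := by
    intro n e he
    rw [Set.mem_ofPred_eq, a.map_r]
    exact a.onV_mem_vorbit n he
  have hS₂ : ∀ n, ∀ e ∈ {e | G.s e ∈ vorbit a v₂}, a.onE n e ∈ {e | G.s e ∈ vorbit a v₂} := by
    intro n e he
    rw [Set.mem_ofPred_eq, a.map_s]
    exact a.onV_mem_vorbit n he
  refine ⟨?_, fun w₁ h₁ => ?_, fun w₂ h₂ => a.card_eq_mul_card_fiber a.map_s hS₁ h₂,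
    fun w₁ h₁ w₁' h₁' => ?_, fun w₂ h₂ w₂' h₂' => a.card_fiber_eq a.map_s hS₁ h₂ h₂'⟩
  · refine ((hfin v₁).biUnion fun w _ => hrow w).subset fun e he => ?_
    exact Set.mem_biUnion he.1 rfl
  -- the two statements about `r` list the conditions on `r e` and `s e` in the other order
  · simpa only [Set.mem_ofPred_eq, and_comm] using a.card_eq_mul_card_fiber a.map_r hS₂ h₁
  · simpa only [Set.mem_ofPred_eq, and_comm] using a.card_fiber_eq a.map_r hS₂ h₁ h₁'
end
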